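/- A Nat-algebra (N, z, s) is inductive (every displayed Nat-algebra over it has a section) if and only if it is initial in the category of Nat-algebras (i.e. for every Nat-algebra (M, z', s') there is exactly one Nat-algebra homomorphism from (N, z, s) to (M, z', s')). -/

import Mathlib

universe u

/-- A Nat-algebra `(N, z, s)` is inductive: every displayed Nat-algebra over it
has a section. -/
def NatAlgInductive {N : Type u} (z : N) (s : N → N) : Prop :=
  ∀ (D : N → Type u) (zD : D z) (sD : ∀ n : N, D n → D (s n)),
    ∃ h : ∀ n, D n, h z = zD ∧ ∀ n : N, h (s n) = sD n (h n)

/-- A Nat-algebra `(N, z, s)` is initial: every Nat-algebra admits exactly one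
homomorphism from it. -/
def NatAlgInitial {N : Type u} (z : N) (s : N → N) : Prop :=
  ∀ (M : Type u) (z' : M) (s' : M → M),
    ∃! k : N → M, k z = z' ∧ ∀ n : N, k (s n) = s' (k n)

/-!
Constant families turn sections into homomorphisms, and families of propositions turn them into
proofs by induction, hence the uniqueness of homomorphisms. Conversely, the total space `Σ n, D n`
of a displayed algebra is an algebra over `N`; composed with the first projection, the homomorphism
into it given by initiality is an endomorphism of `N`, hence the identity, so its second components
form a section.
-/

universe v w

/-- `k` is a homomorphism from the Nat-algebra `(N, z, s)` to `(M, z', s')`, as in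
`NatAlgInitial`, except that the carriers may live in different universes. -/
def IsNatAlgHom {N : Type v} {M : Type w} (z : N) (s : N → N) (z' : M) (s' : M → M)
    (k : N → M) : Prop :=
  k z = z' ∧ Function.Semiconj k s s'

/-- `h` is a section of the displayed Nat-algebra `(D, zD, sD)` over `(N, z, s)`, as in
`NatAlgInductive`, except that `N` and the fibres `D n` may live in different universes. -/
def IsNatAlgSection {N : Type v} {z : N} {s : N → N} {D : N → Type w} (zD : D z)
    (sD : ∀ n, D n → D (s n)) (h : ∀ n, D n) : Prop :=
  h z = zD ∧ ∀ n, h (s n) = sD n (h n)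

namespace IsNatAlgHom

variable {N : Type v} {z : N} {s : N → N}

protected theorem id : IsNatAlgHom z s z s id :=
  ⟨rfl, .id_left⟩

theorem comp {M P : Type*} {z' : M} {s' : M → M} {z'' : P} {s'' : P → P} {l : M → P} {k : N → M}
    (hl : IsNatAlgHom z' s' z'' s'' l) (hk : IsNatAlgHom z s z' s' k) :
    IsNatAlgHom z s z'' s'' (l ∘ k) :=
  ⟨(congrArg l hk.1).trans hl.1, hl.2.comp_left hk.2⟩

theorem sigmaFst {D : N → Type w} (zD : D z) (sD : ∀ n, D n → D (s n)) :
    IsNatAlgHom ⟨z, zD⟩ (Sigma.map s sD) z s Sigma.fst :=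
  ⟨rfl, fun _ => rfl⟩

theorem isNatAlgSection {D : N → Type w} {zD : D z} {sD : ∀ n, D n → D (s n)} {h : ∀ n, D n}
    (hk : IsNatAlgHom z s ⟨z, zD⟩ (Sigma.map s sD) fun n => ⟨n, h n⟩) :
    IsNatAlgSection zD sD h :=
  ⟨sigma_mk_injective hk.1, fun n => sigma_mk_injective (hk.2 n)⟩

theorem exists_isNatAlgSection {D : N → Type w} {zD : D z} {sD : ∀ n, D n → D (s n)}
    {k : N → Sigma D} (hk : IsNatAlgHom z s ⟨z, zD⟩ (Sigma.map s sD) k)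
    (hfst : Sigma.fst ∘ k = id) : ∃ h, IsNatAlgSection zD sD h := by
  obtain ⟨h, hh⟩ := (Equiv.piEquivSubtypeSigma N D).surjective ⟨k, congrFun hfst⟩
  obtain rfl : (fun n => ⟨n, h n⟩) = k := congrArg Subtype.val hh
  exact ⟨h, hk.isNatAlgSection⟩

end IsNatAlgHom

namespace NatAlgInductive

variable {N : Type u} {z : N} {s : N → N}

theorem induction (H : NatAlgInductive z s) {p : N → Prop} (zero : p z)
    (succ : ∀ n, p n → p (s n)) (n : N) : p n := by
  obtain ⟨h, -⟩ := H (fun n => ULift (PLift (p n))) ⟨⟨zero⟩⟩ fun n hn => ⟨⟨succ n hn.down.down⟩⟩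
  exact (h n).down.down

theorem exists_isNatAlgHom (H : NatAlgInductive z s) {M : Type u} (z' : M) (s' : M → M) :
    ∃ k, IsNatAlgHom z s z' s' k :=
  H (fun _ => M) z' fun _ => s'

theorem hom_ext (H : NatAlgInductive z s) {M : Type*} {z' : M} {s' : M → M} {k l : N → M}
    (hk : IsNatAlgHom z s z' s' k) (hl : IsNatAlgHom z s z' s' l) : k = l :=
  funext <| H.induction (hk.1.trans hl.1.symm) fun n (ih : k n = l n) =>
    calc
      k (s n) = s' (k n) := hk.2 n
      _ = s' (l n) := congrArg s' ih
      _ = l (s n) := (hl.2 n).symm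

theorem natAlgInitial (H : NatAlgInductive z s) : NatAlgInitial z s := fun _ z' s' =>
  existsUnique_of_exists_of_unique (H.exists_isNatAlgHom z' s') fun _ _ => H.hom_ext

end NatAlgInductive

namespace NatAlgInitial

variable {N : Type u} {z : N} {s : N → N}

theorem exists_isNatAlgHom (H : NatAlgInitial z s) {M : Type u} (z' : M) (s' : M → M) :
    ∃ k, IsNatAlgHom z s z' s' k :=
  (H M z' s').exists

theorem eq_id (H : NatAlgInitial z s) {k : N → N} (hk : IsNatAlgHom z s z s k) : k = id :=
  (H N z s).unique hk IsNatAlgHom.id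

theorem natAlgInductive (H : NatAlgInitial z s) : NatAlgInductive z s := by
  intro D zD sD
  obtain ⟨k, hk⟩ := H.exists_isNatAlgHom (M := Sigma D) ⟨z, zD⟩ (Sigma.map s sD)
  exact hk.exists_isNatAlgSection (H.eq_id ((IsNatAlgHom.sigmaFst zD sD).comp hk))

end NatAlgInitial

/-- a Nat-algebra is inductive iff it is initial. -/
theorem natAlg_inductive_iff_initial (N : Type u) (z : N) (s : N → N) :
    NatAlgInductive z s ↔ NatAlgInitial z s :=
  ⟨NatAlgInductive.natAlgInitial, NatAlgInitial.natAlgInductive⟩
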